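/- (Relaxed finite-time stability criterion.) Under the standing assumptions on the delayed system, let 0 < ε₁ < ε₂ and suppose there exists η > 0 such that D(ε₁, ρ) := ( ((a₀+a₁)/η) E_β((a₀+a₁+η)(T−t₀)^β) + 1 ) ε₁ + (a₂/η) E_β((a₀+a₁+η)(T−t₀)^β) ρ ≤ ε₂. Then for every initial function ν with sup_{s∈[t₀−g,t₀]} ‖ν(s)‖ ≤ ε₁ and every disturbance d with ‖d(t)‖ ≤ ρ, any continuous x : [t₀−g, T] → ℝⁿ satisfying x = ν on [t₀−g, t₀] and x(t) = ν(t₀) + (1/Γ(β)) ∫_{t₀}^t (t−s)^{β−1} [A₀ x(s) + A₁ x(s−g(s)) + A₂ d(s) + f(s, x(s), x(s−g(s)), d(s))] ds for t ∈ [t₀, T] satisfies ‖x(t)‖ ≤ ε₂ for all t ∈ [t₀, T]. -/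

import Mathlib

open Set ENNReal MeasureTheory intervalIntegral

/-- Euclidean `ℝⁿ`. -/
abbrev Euc (n : ℕ) := EuclideanSpace ℝ (Fin n)

/-- The Mittag-Leffler function `E_β(t) = Σ_{b ≥ 0} t^b / Γ(bβ + 1)`. -/
noncomputable def mittagLeffler (β t : ℝ) : ℝ :=
  ∑' b : ℕ, t ^ b / Real.Gamma (b * β + 1)

/-- The weight function: `h(s) = 1` for `s ≤ t₀` and `h(s) = E_β(θ (s − t₀)^β)` for `s ≥ t₀`. -/
noncomputable def weight (β t₀ θ : ℝ) (s : ℝ) : ℝ :=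
  if s ≤ t₀ then 1 else mittagLeffler β (θ * (s - t₀) ^ β)

/-- The weighted generalized metric
`ϖ(x₁, x₂) = inf { b ∈ [0, ∞] : ‖x₁(t) − x₂(t)‖ ≤ b h(t) for all t ∈ [t₀ − g, T] }`. -/
noncomputable def genDist {n : ℕ} (β t₀ T g θ : ℝ) (x₁ x₂ : ℝ → Euc n) : ℝ≥0∞ :=
  sInf {b : ℝ≥0∞ | ∀ t ∈ Icc (t₀ - g) T,
    (‖x₁ t - x₂ t‖₊ : ℝ≥0∞) ≤ b * ENNReal.ofReal (weight β t₀ θ t)}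

/-- The integral operator `𝒱`:
`(𝒱 y)(t) = ν(t)` on `[t₀ − g, t₀]` and
`(𝒱 y)(t) = ν(t₀) + (1/Γ(β)) ∫_{t₀}^t (t−s)^{β−1} [A₀ y(s) + A₁ y(s−g(s)) + A₂ d(s)
  + f(s, y(s), y(s−g(s)), d(s))] ds` on `[t₀, T]`. -/
noncomputable def Vop {n p : ℕ} (β t₀ : ℝ)
    (A₀ A₁ : Euc n →L[ℝ] Euc n) (A₂ : Euc p →L[ℝ] Euc n)
    (f : ℝ → Euc n → Euc n → Euc p → Euc n) (d : ℝ → Euc p) (gdel : ℝ → ℝ)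
    (ν : ℝ → Euc n) (y : ℝ → Euc n) : ℝ → Euc n :=
  fun t =>
    if t ≤ t₀ then ν t
    else ν t₀ + (Real.Gamma β)⁻¹ •
      ∫ s in t₀..t, ((t - s) ^ (β - 1)) •
        (A₀ (y s) + A₁ (y (s - gdel s)) + A₂ (d s) + f s (y s) (y (s - gdel s)) (d s))

/-!
The weight `h(t) = E_β(θ (t - t₀)^β)`, `θ = a₀ + a₁ + η`, solves `h = 1 + θ I^β h`, where `I^β` is
the Riemann-Liouville integral based at `t₀`. A bound `‖x‖ ≤ ε₁ + K h` survives the delay because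
`h` is monotone, and one application of the integral equation then improves `K` to `q K + (1 - q) C`
with `q = (a₀ + a₁) / θ < 1` and `C = ((a₀ + a₁) ε₁ + a₂ ρ) / η`. The best constant in such a bound
therefore cannot exceed `C`, and `ε₁ + C h(T)` is exactly `D(ε₁, ρ)`.
-/

section MittagLeffler

theorem exp_neg_mul_rpow_le_Gamma_add_one {R x : ℝ} (hR : 0 < R) (hx : 0 ≤ x) :
    Real.exp (-R) * R ^ x ≤ Real.Gamma (x + 1) := by
  have hint : IntegrableOn (fun t : ℝ => Real.exp (-t) * t ^ x) (Ioi 0) := by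
    simpa only [add_sub_cancel_right] using
      Real.GammaIntegral_convergent (s := x + 1) (by linarith)
  have hsub : Ioi R ⊆ Ioi (0 : ℝ) := Ioi_subset_Ioi hR.le
  rw [Real.Gamma_eq_integral (by linarith), ← integral_exp_neg_Ioi R,
    ← MeasureTheory.integral_mul_const]
  simp only [add_sub_cancel_right]
  calc ∫ t in Ioi R, Real.exp (-t) * R ^ x
      ≤ ∫ t in Ioi R, Real.exp (-t) * t ^ x := by
        refine setIntegral_mono_on ((integrableOn_exp_neg_Ioi R).mul_const _)
          (hint.mono_set hsub) measurableSet_Ioi fun t (ht : R < t) => ?_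
        gcongr
    _ ≤ ∫ t in Ioi 0, Real.exp (-t) * t ^ x := by
        refine setIntegral_mono_set hint ?_ hsub.eventuallyLE
        filter_upwards [ae_restrict_mem measurableSet_Ioi] with t (ht : 0 < t)
        simp only [Pi.zero_apply]
        positivity

variable {β : ℝ}

theorem Gamma_natCast_mul_add_one_pos (hβ : 0 < β) (b : ℕ) : 0 < Real.Gamma (b * β + 1) :=
  Real.Gamma_pos_of_pos (by positivity)

theorem norm_mittagLeffler_term (hβ : 0 < β) (t : ℝ) (b : ℕ) :
    ‖t ^ b / Real.Gamma (b * β + 1)‖ = |t| ^ b / Real.Gamma (b * β + 1) := by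
  rw [norm_div, norm_pow, Real.norm_eq_abs,
    Real.norm_of_nonneg (Gamma_natCast_mul_add_one_pos hβ b).le]

theorem norm_mittagLeffler_term_le (hβ : 0 < β) {t R : ℝ} (ht : |t| ≤ R) (b : ℕ) :
    ‖t ^ b / Real.Gamma (b * β + 1)‖ ≤ R ^ b / Real.Gamma (b * β + 1) := by
  have := Gamma_natCast_mul_add_one_pos hβ b
  rw [norm_mittagLeffler_term hβ]
  gcongr

theorem summable_mittagLeffler (hβ : 0 < β) (t : ℝ) :
    Summable fun b : ℕ => t ^ b / Real.Gamma (b * β + 1) := by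
  -- With `R ^ β = 2 (|t| + 1)`, the lower bound on `Γ` makes the `b`-th term at most `e^R 2^(-b)`.
  set R : ℝ := (2 * (|t| + 1)) ^ β⁻¹
  have hR : 0 < R := by positivity
  have hpow (b : ℕ) : R ^ (b * β) = (2 * (|t| + 1)) ^ b := by
    rw [mul_comm, Real.rpow_mul hR.le, Real.rpow_inv_rpow (by positivity) hβ.ne',
      Real.rpow_natCast]
  refine (summable_geometric_two.mul_left (Real.exp R)).of_norm_bounded fun b => ?_
  have hΓ := exp_neg_mul_rpow_le_Gamma_add_one hR (x := b * β) (by positivity)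
  rw [hpow] at hΓ
  rw [norm_mittagLeffler_term hβ, div_le_iff₀ (Gamma_natCast_mul_add_one_pos hβ b)]
  calc |t| ^ b ≤ (|t| + 1) ^ b := by gcongr; linarith
    _ = Real.exp R * (1 / 2) ^ b * (Real.exp (-R) * (2 * (|t| + 1)) ^ b) := by
        rw [Real.exp_neg, mul_pow, one_div, inv_pow]
        field_simp
    _ ≤ Real.exp R * (1 / 2) ^ b * Real.Gamma (b * β + 1) := by gcongr

theorem mittagLeffler_zero (β : ℝ) : mittagLeffler β 0 = 1 := by
  rw [mittagLeffler, tsum_eq_single 0 fun b hb => by simp [hb]]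
  simp

theorem continuous_mittagLeffler (hβ : 0 < β) : Continuous (mittagLeffler β) := by
  refine continuous_iff_continuousAt.2 fun t => ?_
  have hcont : ContinuousOn (mittagLeffler β) (Metric.ball 0 (|t| + 1)) :=
    continuousOn_tsum (fun b => by fun_prop) (summable_mittagLeffler hβ (|t| + 1))
      fun b s hs => norm_mittagLeffler_term_le hβ (mem_ball_zero_iff.1 hs).le b
  refine hcont.continuousAt (Metric.isOpen_ball.mem_nhds (mem_ball_zero_iff.2 ?_))
  rw [Real.norm_eq_abs]
  linarith

theorem monotoneOn_mittagLeffler (hβ : 0 < β) : MonotoneOn (mittagLeffler β) (Ici 0) :=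
  fun t (ht : 0 ≤ t) u _ htu =>
    (summable_mittagLeffler hβ t).tsum_le_tsum (fun b => by
      have := Gamma_natCast_mul_add_one_pos hβ b
      gcongr) (summable_mittagLeffler hβ u)

end MittagLeffler

section Weight

variable {β t₀ θ : ℝ}

theorem weight_eq_mittagLeffler_max (hβ : 0 < β) (s : ℝ) :
    weight β t₀ θ s = mittagLeffler β (θ * max (s - t₀) 0 ^ β) := by
  rcases le_or_gt s t₀ with hs | hs
  · rw [weight, if_pos hs, max_eq_right (sub_nonpos.2 hs), Real.zero_rpow hβ.ne', mul_zero,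
      mittagLeffler_zero]
  · rw [weight, if_neg hs.not_ge, max_eq_left (sub_nonneg.2 hs.le)]

theorem weight_of_le (hβ : 0 < β) {s : ℝ} (hs : t₀ ≤ s) :
    weight β t₀ θ s = mittagLeffler β (θ * (s - t₀) ^ β) := by
  rw [weight_eq_mittagLeffler_max hβ, max_eq_left (sub_nonneg.2 hs)]

theorem continuous_mul_max_sub_rpow (hβ : 0 ≤ β) (t₀ θ : ℝ) :
    Continuous fun s => θ * max (s - t₀) 0 ^ β :=
  continuous_const.mul
    (((continuous_sub_right t₀).max continuous_const).rpow_const fun _ => Or.inr hβ)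

theorem continuous_weight (hβ : 0 < β) : Continuous (weight β t₀ θ) := by
  simp only [funext (weight_eq_mittagLeffler_max hβ)]
  exact (continuous_mittagLeffler hβ).comp (continuous_mul_max_sub_rpow hβ.le t₀ θ)

theorem monotone_weight (hβ : 0 < β) (hθ : 0 ≤ θ) : Monotone (weight β t₀ θ) := fun s r hsr => by
  have hnonneg (u : ℝ) : 0 ≤ θ * max (u - t₀) 0 ^ β := by positivity
  rw [weight_eq_mittagLeffler_max hβ, weight_eq_mittagLeffler_max hβ]
  exact monotoneOn_mittagLeffler hβ (hnonneg s) (hnonneg r) (by gcongr)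

theorem one_le_weight (hβ : 0 < β) (hθ : 0 ≤ θ) (s : ℝ) : 1 ≤ weight β t₀ θ s := by
  rcases le_total s t₀ with hs | hs
  · exact (if_pos hs).ge
  · exact (if_pos le_rfl).ge.trans (monotone_weight hβ hθ hs)

end Weight

section RiemannLiouville

variable {E : Type*} [NormedAddCommGroup E] [NormedSpace ℝ E] {β t₀ t : ℝ}

/-- The Riemann-Liouville fractional integral of order `β` based at `t₀`. -/
noncomputable def rlIntegral (β t₀ : ℝ) (u : ℝ → E) (t : ℝ) : E :=
  (Real.Gamma β)⁻¹ • ∫ s in t₀..t, (t - s) ^ (β - 1) • u s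

theorem intervalIntegrable_sub_rpow (hβ : 0 < β) (t₀ t : ℝ) :
    IntervalIntegrable (fun s => (t - s) ^ (β - 1)) volume t₀ t := by
  simpa only [sub_zero, _root_.sub_sub_cancel] using
    ((intervalIntegrable_rpow' (a := 0) (b := t - t₀) (by linarith : -1 < β - 1)).comp_sub_left
      t).symm

theorem norm_rlIntegral_le_of_norm_le (hβ : 0 < β) (ht : t₀ ≤ t) {u : ℝ → E} {v : ℝ → ℝ}
    (hv : ContinuousOn v (Icc t₀ t)) (huv : ∀ s ∈ Icc t₀ t, ‖u s‖ ≤ v s) :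
    ‖rlIntegral β t₀ u t‖ ≤ rlIntegral β t₀ v t := by
  have hΓ : 0 ≤ (Real.Gamma β)⁻¹ := (inv_pos.2 (Real.Gamma_pos_of_pos hβ)).le
  rw [rlIntegral, norm_smul, Real.norm_of_nonneg hΓ]
  refine mul_le_mul_of_nonneg_left (norm_integral_le_of_norm_le ht ?_
    ((intervalIntegrable_sub_rpow hβ t₀ t).smul_continuousOn (by rwa [uIcc_of_le ht]))) hΓ
  filter_upwards with s hs
  have hker : 0 ≤ (t - s) ^ (β - 1) := Real.rpow_nonneg (sub_nonneg.2 hs.2) _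
  rw [norm_smul, Real.norm_of_nonneg hker]
  exact mul_le_mul_of_nonneg_left (huv s (Ioc_subset_Icc_self hs)) hker

theorem rlIntegral_const_mul (c : ℝ) (v : ℝ → ℝ) :
    rlIntegral β t₀ (fun s => c * v s) t = c * rlIntegral β t₀ v t := by
  simp only [rlIntegral, smul_eq_mul, mul_left_comm _ c, intervalIntegral.integral_const_mul]

theorem hasSum_rlIntegral (hβ : 0 < β) {u : ℕ → ℝ → E} {v : ℕ → ℝ} {w : ℝ → E}
    (hu : ∀ b, AEStronglyMeasurable (u b) (volume.restrict (uIoc t₀ t))) (hv : Summable v)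
    (huv : ∀ b, ∀ s ∈ uIoc t₀ t, ‖u b s‖ ≤ v b)
    (hw : ∀ s ∈ uIoc t₀ t, HasSum (fun b => u b s) (w s)) :
    HasSum (fun b => rlIntegral β t₀ (u b) t) (rlIntegral β t₀ w t) := by
  refine (intervalIntegral.hasSum_integral_of_dominated_convergence
    (fun b s => ‖(t - s) ^ (β - 1)‖ * v b) (fun b => ?_) (fun b => ?_) ?_ ?_ ?_).const_smul _
  · exact (intervalIntegrable_sub_rpow hβ t₀ t).def'.aestronglyMeasurable.smul (hu b)
  · filter_upwards with s hs
    rw [norm_smul]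
    exact mul_le_mul_of_nonneg_left (huv b s hs) (norm_nonneg _)
  · exact ae_of_all _ fun s _ => hv.mul_left _
  · simp only [tsum_mul_left]
    exact (intervalIntegrable_sub_rpow hβ t₀ t).norm.mul_const _
  · exact ae_of_all _ fun s hs => (hw s hs).const_smul _

theorem integral_rpow_mul_sub_rpow {p q a : ℝ} (hp : 0 < p) (hq : 0 < q) (ha : 0 < a) :
    ∫ s in (0 : ℝ)..a, s ^ (p - 1) * (a - s) ^ (q - 1) =
      a ^ (p + q - 1) * ProbabilityTheory.beta p q := by
  have hbeta : Complex.betaIntegral p q = (ProbabilityTheory.beta p q : ℂ) := by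
    rw [Complex.betaIntegral_eq_Gamma_mul_div _ _ (by simpa) (by simpa), ProbabilityTheory.beta,
      ← Complex.ofReal_add]
    simp only [Complex.Gamma_ofReal, Complex.ofReal_div, Complex.ofReal_mul]
  apply Complex.ofReal_injective
  rw [← intervalIntegral.integral_ofReal, Complex.ofReal_mul, Complex.ofReal_cpow ha.le, ← hbeta]
  push_cast
  rw [← Complex.betaIntegral_scaled _ _ ha]
  refine intervalIntegral.integral_congr fun s hs => ?_
  rw [uIcc_of_le ha.le] at hs
  simp only [Complex.ofReal_cpow hs.1, Complex.ofReal_cpow (sub_nonneg.2 hs.2),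
    Complex.ofReal_sub, Complex.ofReal_one]

theorem rlIntegral_sub_rpow (hβ : 0 < β) (ht : t₀ < t) {p : ℝ} (hp : -1 < p) :
    rlIntegral β t₀ (fun s => (s - t₀) ^ p) t =
      Real.Gamma (p + 1) / Real.Gamma (p + β + 1) * (t - t₀) ^ (p + β) := by
  have hΓ : Real.Gamma β ≠ 0 := (Real.Gamma_pos_of_pos hβ).ne'
  have hshift : ∫ s in t₀..t, (t - s) ^ (β - 1) • (s - t₀) ^ p =
      ∫ r in (0 : ℝ)..(t - t₀), r ^ (p + 1 - 1) * (t - t₀ - r) ^ (β - 1) := by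
    rw [← sub_self t₀, ← intervalIntegral.integral_comp_sub_right]
    simp only [sub_sub_sub_cancel_right, add_sub_cancel_right, smul_eq_mul, mul_comm]
  rw [rlIntegral, hshift, integral_rpow_mul_sub_rpow (by linarith) hβ (sub_pos.2 ht),
    ProbabilityTheory.beta, add_right_comm p 1 β, add_sub_cancel_right, smul_eq_mul]
  field_simp

theorem mul_rlIntegral_mittagLeffler_term (hβ : 0 < β) (ht : t₀ < t) (θ : ℝ) (b : ℕ) :
    θ * rlIntegral β t₀ (fun s => (θ * max (s - t₀) 0 ^ β) ^ b / Real.Gamma (b * β + 1)) t =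
      (θ * (t - t₀) ^ β) ^ (b + 1) / Real.Gamma ((b + 1 : ℕ) * β + 1) := by
  have hΓ := (Gamma_natCast_mul_add_one_pos hβ b).ne'
  have hpow {r : ℝ} (hr : 0 ≤ r) (k : ℕ) : (r ^ β) ^ k = r ^ (k * β) := by
    rw [mul_comm, Real.rpow_mul hr, Real.rpow_natCast]
  have hcongr : rlIntegral β t₀
        (fun s => (θ * max (s - t₀) 0 ^ β) ^ b / Real.Gamma (b * β + 1)) t =
      rlIntegral β t₀ (fun s => θ ^ b / Real.Gamma (b * β + 1) * (s - t₀) ^ (b * β)) t := by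
    refine congrArg _ (intervalIntegral.integral_congr fun s hs => ?_)
    rw [uIcc_of_le ht.le] at hs
    have hs₀ : 0 ≤ s - t₀ := sub_nonneg.2 hs.1
    simp only [max_eq_left hs₀, mul_pow, hpow hs₀, div_mul_eq_mul_div]
  have hexp : (b : ℝ) * β + β = (b + 1 : ℕ) * β := by push_cast; ring
  rw [hcongr, rlIntegral_const_mul,
    rlIntegral_sub_rpow hβ ht (neg_one_lt_zero.trans_le (by positivity)), hexp, mul_pow,
    hpow (sub_nonneg.2 ht.le), pow_succ']
  field_simp

theorem weight_eq_one_add_mul_rlIntegral (hβ : 0 < β) (ht : t₀ ≤ t) (θ : ℝ) :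
    weight β t₀ θ t = 1 + θ * rlIntegral β t₀ (weight β t₀ θ) t := by
  rcases ht.eq_or_lt with rfl | ht
  · simp [weight, rlIntegral]
  have hcont (b : ℕ) : Continuous fun s =>
      (θ * max (s - t₀) 0 ^ β) ^ b / Real.Gamma (b * β + 1) :=
    ((continuous_mul_max_sub_rpow hβ.le t₀ θ).pow b).div_const _
  have hbound (s : ℝ) (hs : s ∈ uIoc t₀ t) :
      |θ * max (s - t₀) 0 ^ β| ≤ |θ| * (t - t₀) ^ β := by
    rw [uIoc_of_le ht.le] at hs
    have hs₀ : 0 ≤ s - t₀ := sub_nonneg.2 hs.1.le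
    rw [max_eq_left hs₀, abs_mul, abs_of_nonneg (Real.rpow_nonneg hs₀ β)]
    gcongr
    exact hs.2
  have hsum := (hasSum_rlIntegral hβ (fun b => (hcont b).aestronglyMeasurable)
    (summable_mittagLeffler hβ (|θ| * (t - t₀) ^ β))
    (fun b s hs => norm_mittagLeffler_term_le hβ (hbound s hs) b)
    fun s _ => (summable_mittagLeffler hβ _).hasSum).mul_left θ
  have hweight : weight β t₀ θ = fun s =>
      ∑' b : ℕ, (θ * max (s - t₀) 0 ^ β) ^ b / Real.Gamma (b * β + 1) :=
    funext (weight_eq_mittagLeffler_max hβ)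
  simp only [mul_rlIntegral_mittagLeffler_term hβ ht, ← hweight] at hsum
  rw [← hsum.tsum_eq, weight_of_le hβ ht.le, mittagLeffler,
    (summable_mittagLeffler hβ _).tsum_eq_zero_add]
  simp

theorem norm_rlIntegral_le_of_norm_le_mul_weight (hβ : 0 < β) (ht : t₀ ≤ t) {θ L : ℝ}
    (hθ : 0 < θ) (hL : 0 ≤ L) {u : ℝ → E} (hu : ∀ s ∈ Icc t₀ t, ‖u s‖ ≤ L * weight β t₀ θ s) :
    ‖rlIntegral β t₀ u t‖ ≤ L / θ * weight β t₀ θ t :=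
  calc ‖rlIntegral β t₀ u t‖
      ≤ rlIntegral β t₀ (fun s => L * weight β t₀ θ s) t :=
        norm_rlIntegral_le_of_norm_le hβ ht ((continuous_weight hβ).const_mul L).continuousOn hu
    _ = L / θ * (θ * rlIntegral β t₀ (weight β t₀ θ) t) := by
        rw [rlIntegral_const_mul]
        field_simp
    _ ≤ L / θ * weight β t₀ θ t := by
        rw [weight_eq_one_add_mul_rlIntegral hβ ht θ]
        gcongr
        linarith

end RiemannLiouville

section DelayedGronwall

theorem le_add_mul_of_forall_le_affine {α : Type*} {S : Set α} {v w : α → ℝ} {ε q C : ℝ}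
    (hq : q < 1) (hv : BddAbove (v '' S)) (hw : ∀ t ∈ S, 1 ≤ w t)
    (himprove : ∀ K ≥ C, (∀ t ∈ S, v t ≤ ε + K * w t) →
      ∀ t ∈ S, v t ≤ ε + (q * K + (1 - q) * C) * w t) :
    ∀ t ∈ S, v t ≤ ε + C * w t := by
  set r : α → ℝ := fun t => (v t - ε) / w t
  have hr_le {K : ℝ} {t : α} (ht : t ∈ S) : r t ≤ K ↔ v t ≤ ε + K * w t := by
    rw [div_le_iff₀ (one_pos.trans_le (hw t ht)), sub_le_iff_le_add']
  have hr_bdd : BddAbove (r '' S) := by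
    obtain ⟨B, hB⟩ := hv
    refine ⟨max 0 (B - ε), forall_mem_image.2 fun t ht => (hr_le ht).2 ?_⟩
    have hvB : v t ≤ B := hB (mem_image_of_mem v ht)
    have hmul := le_mul_of_one_le_right (le_max_left 0 (B - ε)) (hw t ht)
    linarith [le_max_right 0 (B - ε)]
  by_contra! ⟨t, ht, hCt⟩
  have hCr : C < r t := lt_of_not_ge fun h => hCt.not_ge ((hr_le ht).1 h)
  have hr_sSup (t : α) (ht : t ∈ S) : r t ≤ sSup (r '' S) :=
    le_csSup hr_bdd (mem_image_of_mem r ht)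
  have hC_lt : C < sSup (r '' S) := hCr.trans_le (hr_sSup t ht)
  have hle : sSup (r '' S) ≤ q * sSup (r '' S) + (1 - q) * C :=
    csSup_le ⟨r t, mem_image_of_mem r ht⟩ <| forall_mem_image.2 fun s hs =>
      (hr_le hs).2 (himprove _ hC_lt.le (fun t ht => (hr_le ht).1 (hr_sSup t ht)) s hs)
  linarith [mul_pos (sub_pos.2 hq) (sub_pos.2 hC_lt)]

variable {β t₀ T g ε : ℝ} {gdel : ℝ → ℝ}

theorem comp_sub_delay_le_add {v φ : ℝ → ℝ} (hφ : Monotone φ) (hφ_nonneg : 0 ≤ φ)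
    (hgdel : ∀ t ∈ Icc t₀ T, gdel t ∈ Icc 0 g) (hv_init : ∀ s ∈ Icc (t₀ - g) t₀, v s ≤ ε)
    (hv : ∀ t ∈ Icc t₀ T, v t ≤ ε + φ t) {s : ℝ} (hs : s ∈ Icc t₀ T) :
    v (s - gdel s) ≤ ε + φ s := by
  obtain ⟨hgdel_nonneg, hgdel_le⟩ := hgdel s hs
  rcases le_total (s - gdel s) t₀ with hle | hle
  · exact (hv_init _ ⟨by linarith [hs.1], hle⟩).trans (le_add_of_nonneg_right (hφ_nonneg s))
  · have hle_s : s - gdel s ≤ s := sub_le_self s hgdel_nonneg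
    exact (hv _ ⟨hle, hle_s.trans hs.2⟩).trans (add_le_add_right (hφ hle_s) ε)

variable {E : Type*} [NormedAddCommGroup E] [NormedSpace ℝ E] {F x : ℝ → E}

/-- The function `x` solves `ᶜD^β_{t₀} x = F` on `[t₀, T]` in Volterra form. Integrability is
required because the integral of a non-integrable function is `0` by convention. -/
structure IsVolterraSolution (β t₀ T : ℝ) (F x : ℝ → E) : Prop where
  intervalIntegrable : ∀ t ∈ Icc t₀ T,
    IntervalIntegrable (fun s => (t - s) ^ (β - 1) • F s) volume t₀ t
  eq_add_rlIntegral : ∀ t ∈ Icc t₀ T, x t = x t₀ + rlIntegral β t₀ F t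

theorem isVolterraSolution_of_continuousOn (hβ : 0 < β) (hF : ContinuousOn F (Icc t₀ T))
    (hx : ∀ t ∈ Icc t₀ T, x t = x t₀ + rlIntegral β t₀ F t) : IsVolterraSolution β t₀ T F x where
  intervalIntegrable t ht := (intervalIntegrable_sub_rpow hβ t₀ t).smul_continuousOn <|
    hF.mono <| by
      rw [uIcc_of_le ht.1]
      exact Icc_subset_Icc_right ht.2
  eq_add_rlIntegral := hx

variable {a b c : ℝ}

theorem IsVolterraSolution.norm_le_of_norm_le_add_mul_weight (h : IsVolterraSolution β t₀ T F x)
    (hβ : 0 < β) {θ K : ℝ} (hθ : 0 < θ) (hK : 0 ≤ K) (ha : 0 ≤ a) (hb : 0 ≤ b) (hc : 0 ≤ c)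
    (hgdel : ∀ t ∈ Icc t₀ T, gdel t ∈ Icc 0 g)
    (hx_init : ∀ s ∈ Icc (t₀ - g) t₀, ‖x s‖ ≤ ε) (hx₀ : ‖x t₀‖ ≤ ε)
    (hF : ∀ s ∈ Icc t₀ T, ‖F s‖ ≤ a * ‖x s‖ + b * ‖x (s - gdel s)‖ + c)
    (hx : ∀ t ∈ Icc t₀ T, ‖x t‖ ≤ ε + K * weight β t₀ θ t) :
    ∀ t ∈ Icc t₀ T,
      ‖x t‖ ≤ ε + ((a + b) * ε + c + (a + b) * K) / θ * weight β t₀ θ t := by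
  intro t ht
  have hε : 0 ≤ ε := (norm_nonneg _).trans hx₀
  have hw (s : ℝ) : 1 ≤ weight β t₀ θ s := one_le_weight hβ hθ.le s
  have hF_le (s : ℝ) (hs : s ∈ Icc t₀ t) :
      ‖F s‖ ≤ ((a + b) * ε + c + (a + b) * K) * weight β t₀ θ s := by
    have hsT : s ∈ Icc t₀ T := ⟨hs.1, hs.2.trans ht.2⟩
    have hdelay : ‖x (s - gdel s)‖ ≤ ε + K * weight β t₀ θ s :=
      comp_sub_delay_le_add (v := fun r => ‖x r‖) ((monotone_weight hβ hθ.le).const_mul hK)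
        (fun r => mul_nonneg hK (zero_le_one.trans (hw r))) hgdel hx_init hx hsT
    calc ‖F s‖ ≤ a * ‖x s‖ + b * ‖x (s - gdel s)‖ + c := hF s hsT
      _ ≤ a * (ε + K * weight β t₀ θ s) + b * (ε + K * weight β t₀ θ s) + c := by
          gcongr
          exact hx s hsT
      _ = ((a + b) * ε + c) * 1 + (a + b) * K * weight β t₀ θ s := by ring
      _ ≤ ((a + b) * ε + c) * weight β t₀ θ s + (a + b) * K * weight β t₀ θ s := by
          gcongr
          exact hw s
      _ = ((a + b) * ε + c + (a + b) * K) * weight β t₀ θ s := by ring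
  calc ‖x t‖ ≤ ‖x t₀‖ + ‖rlIntegral β t₀ F t‖ := by
        rw [h.eq_add_rlIntegral t ht]
        exact norm_add_le _ _
    _ ≤ ε + ((a + b) * ε + c + (a + b) * K) / θ * weight β t₀ θ t := by
        gcongr
        exact norm_rlIntegral_le_of_norm_le_mul_weight hβ ht.1 hθ (by positivity) hF_le

theorem IsVolterraSolution.norm_le_add_mul_weight (h : IsVolterraSolution β t₀ T F x)
    (hβ : 0 < β) {η : ℝ} (hη : 0 < η) (ha : 0 ≤ a) (hb : 0 ≤ b) (hc : 0 ≤ c)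
    (hgdel : ∀ t ∈ Icc t₀ T, gdel t ∈ Icc 0 g) (hx_bdd : BddAbove ((fun t => ‖x t‖) '' Icc t₀ T))
    (hx_init : ∀ s ∈ Icc (t₀ - g) t₀, ‖x s‖ ≤ ε) (hx₀ : ‖x t₀‖ ≤ ε)
    (hF : ∀ s ∈ Icc t₀ T, ‖F s‖ ≤ a * ‖x s‖ + b * ‖x (s - gdel s)‖ + c) :
    ∀ t ∈ Icc t₀ T, ‖x t‖ ≤ ε + ((a + b) * ε + c) / η * weight β t₀ (a + b + η) t := by
  have hε : 0 ≤ ε := (norm_nonneg _).trans hx₀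
  have hθ : 0 < a + b + η := by positivity
  refine le_add_mul_of_forall_le_affine (q := (a + b) / (a + b + η))
    ((div_lt_one hθ).2 (by linarith)) hx_bdd (fun t _ => one_le_weight hβ hθ.le t)
    fun K hK hx t ht => ?_
  have hK_nonneg : 0 ≤ K := le_trans (by positivity) hK
  have himproved : ((a + b) * ε + c + (a + b) * K) / (a + b + η) =
      (a + b) / (a + b + η) * K +
        (1 - (a + b) / (a + b + η)) * (((a + b) * ε + c) / η) := by
    field_simp
    ring
  rw [← himproved]
  exact h.norm_le_of_norm_le_add_mul_weight hβ hθ hK_nonneg ha hb hc hgdel hx_init hx₀ hF hx t ht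

end DelayedGronwall

section DelayedSystem

variable {E D : Type*} [NormedAddCommGroup E] [NormedSpace ℝ E] [NormedAddCommGroup D]
  [NormedSpace ℝ D] {β t₀ T g η : ℝ} {gdel : ℝ → ℝ} {f : ℝ → E → E → D → E} {d : ℝ → D}
  {x : ℝ → E}

/-- The right-hand side of the delayed system along the trajectory `x`. -/
def delayedField (A₀ A₁ : E →L[ℝ] E) (A₂ : D →L[ℝ] E) (f : ℝ → E → E → D → E) (d : ℝ → D)
    (gdel : ℝ → ℝ) (x : ℝ → E) (s : ℝ) : E :=
  A₀ (x s) + A₁ (x (s - gdel s)) + A₂ (d s) + f s (x s) (x (s - gdel s)) (d s)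

variable (A₀ A₁ : E →L[ℝ] E) (A₂ : D →L[ℝ] E)

theorem norm_delayedField_le {k s : ℝ}
    (hf : ∀ u v w, ‖f s u v w‖ ≤ k * (‖u‖ + ‖v‖ + ‖w‖)) :
    ‖delayedField A₀ A₁ A₂ f d gdel x s‖ ≤
      (‖A₀‖ + k) * ‖x s‖ + (‖A₁‖ + k) * ‖x (s - gdel s)‖ + (‖A₂‖ + k) * ‖d s‖ :=
  norm_add₄_le.trans <| by
    linarith [A₀.le_opNorm (x s), A₁.le_opNorm (x (s - gdel s)), A₂.le_opNorm (d s),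
      hf (x s) (x (s - gdel s)) (d s)]

theorem continuousOn_delayedField
    (hf : Continuous fun q : ℝ × E × E × D => f q.1 q.2.1 q.2.2.1 q.2.2.2)
    (hd : ContinuousOn d (Icc t₀ T)) (hgdel : ContinuousOn gdel (Icc t₀ T))
    (hgdel_mem : ∀ t ∈ Icc t₀ T, gdel t ∈ Icc 0 g) (hx : ContinuousOn x (Icc (t₀ - g) T)) :
    ContinuousOn (delayedField A₀ A₁ A₂ f d gdel x) (Icc t₀ T) := by
  have hx_delay : ContinuousOn (fun s => x (s - gdel s)) (Icc t₀ T) :=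
    hx.comp (continuousOn_id.sub hgdel) fun s hs =>
      ⟨sub_le_sub hs.1 (hgdel_mem s hs).2, (sub_le_self s (hgdel_mem s hs).1).trans hs.2⟩
  have hx_now : ContinuousOn x (Icc t₀ T) := hx.mono fun s hs =>
    ⟨(sub_le_self t₀ ((hgdel_mem s hs).1.trans (hgdel_mem s hs).2)).trans hs.1, hs.2⟩
  exact (((A₀.continuous.comp_continuousOn hx_now).add
    (A₁.continuous.comp_continuousOn hx_delay)).add (A₂.continuous.comp_continuousOn hd)).add
    (hf.comp_continuousOn (continuousOn_id.prodMk (hx_now.prodMk (hx_delay.prodMk hd))))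

theorem relaxed_finite_time_stability_general [CompleteSpace E] (hβ : 0 < β) (hη : 0 < η)
    (hgdel : ∀ t ∈ Icc t₀ T, gdel t ∈ Icc 0 g) {κ : ℝ → ℝ} (hκ : ∀ s ∈ Icc t₀ T, 0 ≤ κ s)
    (hf : ∀ s ∈ Icc t₀ T, ∀ u v w, ‖f s u v w‖ ≤ κ s * (‖u‖ + ‖v‖ + ‖w‖))
    {ρ : ℝ} (hd : ∀ s ∈ Icc t₀ T, ‖d s‖ ≤ ρ) {a₀ a₁ a₂ : ℝ}
    (ha₀ : ∀ s ∈ Icc t₀ T, ‖A₀‖ + κ s ≤ a₀) (ha₁ : ∀ s ∈ Icc t₀ T, ‖A₁‖ + κ s ≤ a₁)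
    (ha₂ : ∀ s ∈ Icc t₀ T, ‖A₂‖ + κ s ≤ a₂) {ε₁ ε₂ : ℝ}
    (hD : ((a₀ + a₁) / η * mittagLeffler β ((a₀ + a₁ + η) * (T - t₀) ^ β) + 1) * ε₁ +
        a₂ / η * mittagLeffler β ((a₀ + a₁ + η) * (T - t₀) ^ β) * ρ ≤ ε₂)
    (hx_bdd : BddAbove ((fun t => ‖x t‖) '' Icc t₀ T))
    (hx_init : ∀ s ∈ Icc (t₀ - g) t₀, ‖x s‖ ≤ ε₁)
    (hx : IsVolterraSolution β t₀ T (delayedField A₀ A₁ A₂ f d gdel x) x) :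
    ∀ t ∈ Icc t₀ T, ‖x t‖ ≤ ε₂ := by
  intro t ht
  have hT : t₀ ≤ T := ht.1.trans ht.2
  have ht₀ : t₀ ∈ Icc t₀ T := left_mem_Icc.2 hT
  have hκ₀ := hκ t₀ ht₀
  have ha₀_nonneg : 0 ≤ a₀ := le_trans (by positivity) (ha₀ t₀ ht₀)
  have ha₁_nonneg : 0 ≤ a₁ := le_trans (by positivity) (ha₁ t₀ ht₀)
  have ha₂_nonneg : 0 ≤ a₂ := le_trans (by positivity) (ha₂ t₀ ht₀)
  have hρ : 0 ≤ ρ := (norm_nonneg _).trans (hd t₀ ht₀)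
  have hx₀ : ‖x t₀‖ ≤ ε₁ :=
    hx_init t₀ ⟨sub_le_self t₀ ((hgdel t₀ ht₀).1.trans (hgdel t₀ ht₀).2), le_rfl⟩
  have hε₁ : 0 ≤ ε₁ := (norm_nonneg _).trans hx₀
  have hF (s : ℝ) (hs : s ∈ Icc t₀ T) : ‖delayedField A₀ A₁ A₂ f d gdel x s‖ ≤
      a₀ * ‖x s‖ + a₁ * ‖x (s - gdel s)‖ + a₂ * ρ :=
    (norm_delayedField_le A₀ A₁ A₂ (hf s hs)).trans <| by
      gcongr
      exacts [ha₀ s hs, ha₁ s hs, ha₂ s hs, hd s hs]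
  calc ‖x t‖ ≤ ε₁ + ((a₀ + a₁) * ε₁ + a₂ * ρ) / η * weight β t₀ (a₀ + a₁ + η) t :=
        hx.norm_le_add_mul_weight hβ hη ha₀_nonneg ha₁_nonneg (by positivity) hgdel hx_bdd
          hx_init hx₀ hF t ht
    _ ≤ ε₁ + ((a₀ + a₁) * ε₁ + a₂ * ρ) / η * weight β t₀ (a₀ + a₁ + η) T := by
        gcongr
        exact monotone_weight hβ (by positivity) ht.2
    _ = ((a₀ + a₁) / η * mittagLeffler β ((a₀ + a₁ + η) * (T - t₀) ^ β) + 1) * ε₁ +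
          a₂ / η * mittagLeffler β ((a₀ + a₁ + η) * (T - t₀) ^ β) * ρ := by
        rw [weight_of_le hβ hT]
        ring
    _ ≤ ε₂ := hD

end DelayedSystem

/-- Relaxed finite-time stability criterion. Under the standing assumptions, if there is
`η > 0` with
`D(ε₁, ρ) = (((a₀+a₁)/η) E_β((a₀+a₁+η)(T−t₀)^β) + 1) ε₁ + (a₂/η) E_β((a₀+a₁+η)(T−t₀)^β) ρ ≤ ε₂`,
then every solution of the Volterra integral equation with `‖ν‖ ≤ ε₁` and `‖d(t)‖ ≤ ρ`
satisfies `‖x(t)‖ ≤ ε₂` on `[t₀, T]`. -/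
theorem relaxed_finite_time_stability {n p : ℕ} (β t₀ T g η : ℝ)
    (hβ0 : 0 < β) (hβ1 : β < 1) (hT : t₀ < T) (hg : 0 ≤ g) (hη : 0 < η)
    (gdel : ℝ → ℝ) (hgdel_cont : ContinuousOn gdel (Icc t₀ T))
    (hgdel_mem : ∀ t ∈ Icc t₀ T, gdel t ∈ Icc 0 g)
    (A₀ A₁ : Euc n →L[ℝ] Euc n) (A₂ : Euc p →L[ℝ] Euc n)
    (κ : ℝ → ℝ) (hκ_cont : Continuous κ) (hκ_nonneg : ∀ s, 0 ≤ κ s)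
    (f : ℝ → Euc n → Euc n → Euc p → Euc n)
    (hf_cont : Continuous fun q : ℝ × Euc n × Euc n × Euc p => f q.1 q.2.1 q.2.2.1 q.2.2.2)
    (hf_lip : ∀ (s : ℝ) (u₁ u₂ : Euc n) (u₃ : Euc p) (w₁ w₂ : Euc n) (w₃ : Euc p),
      ‖f s u₁ u₂ u₃ - f s w₁ w₂ w₃‖ ≤ κ s * (‖u₁ - w₁‖ + ‖u₂ - w₂‖ + ‖u₃ - w₃‖))
    (hf_zero : ∀ s : ℝ, f s 0 0 0 = 0)
    (ρ : ℝ) (hρ : 0 < ρ) (d : ℝ → Euc p) (hd_cont : Continuous d) (hd : ∀ t, ‖d t‖ ≤ ρ)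
    (ν : ℝ → Euc n) (hν : ContinuousOn ν (Icc (t₀ - g) t₀))
    (a₀ a₁ a₂ : ℝ)
    (ha₀ : IsGreatest ((fun s => ‖A₀‖ + κ s) '' Icc t₀ T) a₀)
    (ha₁ : IsGreatest ((fun s => ‖A₁‖ + κ s) '' Icc t₀ T) a₁)
    (ha₂ : IsGreatest ((fun s => ‖A₂‖ + κ s) '' Icc t₀ T) a₂)
    (M : ℝ) (hM : M = sSup ((fun s : ℝ =>
      (s - t₀) ^ β / mittagLeffler β ((a₀ + a₁ + η) * (s - t₀) ^ β)) '' Icc t₀ T))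
    (νnorm : ℝ) (hνnorm : νnorm = sSup ((fun s => ‖ν s‖) '' Icc (t₀ - g) t₀))
    (ε₁ ε₂ : ℝ) (hε₁ : 0 < ε₁) (hε₁₂ : ε₁ < ε₂)
    (hD : ((a₀ + a₁) / η * mittagLeffler β ((a₀ + a₁ + η) * (T - t₀) ^ β) + 1) * ε₁ +
        a₂ / η * mittagLeffler β ((a₀ + a₁ + η) * (T - t₀) ^ β) * ρ ≤ ε₂)
    (hν_small : νnorm ≤ ε₁)
    (x : ℝ → Euc n) (hx_cont : ContinuousOn x (Icc (t₀ - g) T))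
    (hx_init : ∀ s ∈ Icc (t₀ - g) t₀, x s = ν s)
    (hx_eq : ∀ t ∈ Icc t₀ T, x t = ν t₀ + (Real.Gamma β)⁻¹ •
      ∫ s in t₀..t, ((t - s) ^ (β - 1)) •
        (A₀ (x s) + A₁ (x (s - gdel s)) + A₂ (d s)
          + f s (x s) (x (s - gdel s)) (d s))) :
    ∀ t ∈ Icc t₀ T, ‖x t‖ ≤ ε₂ := by
  have hν_le (s : ℝ) (hs : s ∈ Icc (t₀ - g) t₀) : ‖ν s‖ ≤ ε₁ :=
    (le_csSup (isCompact_Icc.bddAbove_image hν.norm) (mem_image_of_mem _ hs)).trans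
      (hνnorm ▸ hν_small)
  have hxν : x t₀ = ν t₀ := hx_init t₀ ⟨sub_le_self t₀ hg, le_rfl⟩
  have hx : IsVolterraSolution β t₀ T (delayedField A₀ A₁ A₂ f d gdel x) x :=
    isVolterraSolution_of_continuousOn hβ0
      (continuousOn_delayedField A₀ A₁ A₂ hf_cont hd_cont.continuousOn hgdel_cont hgdel_mem hx_cont)
      fun t ht => hxν ▸ hx_eq t ht
  refine relaxed_finite_time_stability_general A₀ A₁ A₂ hβ0 hη hgdel_mem (fun s _ => hκ_nonneg s)
    (fun s _ u v w => ?_) (fun s _ => hd s) (forall_mem_image.1 ha₀.2) (forall_mem_image.1 ha₁.2)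
    (forall_mem_image.1 ha₂.2) hD ?_ (fun s hs => hx_init s hs ▸ hν_le s hs) hx
  · simpa only [hf_zero, sub_zero] using hf_lip s u v w 0 0 0
  · exact isCompact_Icc.bddAbove_image
      (hx_cont.mono (Icc_subset_Icc_left (sub_le_self t₀ hg))).norm
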